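/- Let R be a K-vector space, M the recursive brace operation on decorated trees, and ⋆ the induced Loday–Ronco product on decorated forests. Then ⋆ is associative with unit the empty forest 1, the deconcatenation coproduct Δ is multiplicative for ⋆ (so (T(R^𝒯), ⋆, Δ) is a bialgebra), and ⋆ is right-sided: for every p ≥ 0, (⊕_{n≥p} (R^𝒯)^{⊗n}) ⋆ T(R^𝒯) ⊆ ⊕_{n≥p} (R^𝒯)^{⊗n}. -/

import Mathlib

/-! Common setup: `R`-decorated planar rooted trees, decorated forests,
the free module `R^𝒯` they span, and the Loday–Ronco product on `T(R^𝒯)`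
induced by the recursive brace operation `M(B₊ˣ(f₁); f₂) = B₊ˣ(f₁ ⋆ f₂)`. -/

/-- Planar rooted trees with vertices decorated by elements of `R`. -/
inductive PTree (R : Type*) : Type _
  | node : R → List (PTree R) → PTree R

section

variable (K : Type*) [Field K]
variable {R : Type*}

/-- All splittings of a list into a prefix and a suffix. -/
def splits {α : Type*} (l : List α) : List (List α × List α) :=
  (List.range (l.length + 1)).map fun i => (l.take i, l.drop i)

/-- All factorizations of a list into `k` (possibly empty) consecutive factors. -/
def splitsN {α : Type*} : ℕ → List α → List (List (List α))
  | 0, l => if l.isEmpty then [[]] else []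
  | k + 1, l => (splits l).flatMap fun p => (splitsN k p.2).map fun r => p.1 :: r

/-- Decorated forests: words of decorated trees. -/
abbrev Forest (R : Type*) := List (PTree R)

/-- `B₊ˣ` : grafting of a decorated forest onto a new root decorated by `x`. -/
def Bplus (x : R) (f : Forest R) : PTree R := PTree.node x f

variable (R)

/-- The space `R^𝒯` spanned by the decorated trees. -/
abbrev TreeMod := PTree R →₀ K

/-- The space `T(R^𝒯)` of decorated forests. -/
abbrev ForestMod := Forest R →₀ K

variable {R K}

/-- The element of `T(R^𝒯)` obtained from a word whose letters are linear
combinations of decorated trees, expanding multilinearly (in particular a word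
containing the letter `0` gives `0`). -/
noncomputable def wordOf : List (TreeMod K R) → ForestMod K R
  | [] => Finsupp.single ([] : Forest R) 1
  | a :: rest => a.sum fun t c => c • Finsupp.mapDomain (List.cons t) (wordOf rest)

/-- Extension `M(F;G)` of the brace operation to pairs of forests:
`M(1;1) = 0`, `M(1;s) = s` and `M(t;G) = M(t;G)` for a single tree `t`
(so `M(t;1) = t`), `M(F;G) = 0` if `F` has more than one tree. -/
noncomputable def MextF (Mh : PTree R → Forest R → TreeMod K R) : Forest R → Forest R → TreeMod K R
  | [], [] => 0
  | [], [s] => Finsupp.single s 1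
  | [], _ :: _ :: _ => 0
  | [t], ys => Mh t ys
  | _ :: _ :: _, _ => 0

/-- The Loday–Ronco product `X ⋆ Y = Σ_{k≥1} Σ_{X=X¹⋯X^k, Y=Y¹⋯Y^k}
M(X¹;Y¹)⋯M(X^k;Y^k)` built from a brace operation `Mh` on decorated trees
(with `1 ⋆ 1 = 1`; the terms with `k > |X| + |Y|` vanish, each containing the
letter `M(1;1) = 0`). -/
noncomputable def starRHS (Mh : PTree R → Forest R → TreeMod K R) : Forest R → Forest R → ForestMod K R
  | [], [] => Finsupp.single ([] : Forest R) 1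
  | X, Y =>
    ((List.range (X.length + Y.length)).flatMap fun k =>
      (splitsN (k + 1) X).flatMap fun Xs =>
        (splitsN (k + 1) Y).map fun Ys =>
          wordOf (List.zipWith (MextF Mh) Xs Ys)).sum

/-- `Mh` and `star` satisfy the defining recursion of the brace operation on
decorated trees: `M(B₊ˣ(f₁); f₂) = B₊ˣ(f₁ ⋆ f₂)` (with `B₊ˣ` extended linearly),
where `⋆` is the Loday–Ronco product built from `Mh`. -/
def IsTreeBrace (Mh : PTree R → Forest R → TreeMod K R)
    (star : Forest R → Forest R → ForestMod K R) : Prop :=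
  (∀ (x : R) (f₁ f₂ : Forest R),
      Mh (Bplus x f₁) f₂ = Finsupp.mapDomain (Bplus x) (star f₁ f₂)) ∧
  (∀ X Y : Forest R, star X Y = starRHS Mh X Y)

end

open scoped TensorProduct

section

variable {K : Type*} [Field K] {R : Type*}

/-- Bilinear extension of `⋆` to `T(R^𝒯)`. -/
noncomputable def starLin (star : Forest R → Forest R → ForestMod K R)
    (a b : ForestMod K R) : ForestMod K R :=
  a.sum fun X c => b.sum fun Y d => (c * d) • star X Y

/-- The deconcatenation coproduct `Δ(t₁⋯tₙ) = Σᵢ (t₁⋯tᵢ) ⊗ (t_{i+1}⋯tₙ)` on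
`T(R^𝒯)`, extended linearly. -/
noncomputable def deconc (a : ForestMod K R) : ForestMod K R ⊗[K] ForestMod K R :=
  a.sum fun f c => c •
    ∑ i ∈ Finset.range (f.length + 1),
      Finsupp.single (f.take i) (1 : K) ⊗ₜ[K] Finsupp.single (f.drop i) (1 : K)

/-! Peeling off the first factor turns the definition of `⋆` into the recursion
`X ⋆ Y = ε(X) ε(Y) 1 + ∑ M(X¹; Y¹) (X² ⋆ Y²)`, summed over all factorizations `X = X¹ X²` and
`Y = Y¹ Y²`; since `M(1; 1) = 0`, it determines `⋆` by induction on `|X| + |Y|`. With the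
coassociativity of deconcatenation it yields `Δ(X ⋆ Y) = Δ(X) ⋆ Δ(Y)` for an arbitrary brace `M`.
Substituting this into the recursion, both `(X ⋆ Y) ⋆ Z` and `X ⋆ (Y ⋆ Z)` become sums over
factorizations of `X`, `Y` and `Z`, which agree by induction once `M(X ⋆ Y; Z) = M(X; Y ⋆ Z)`. The
length-one part of `X ⋆ Y` is `M(X; Y)`, so this relation only has content when `X` is a single tree
`B₊ˣ(f)`, where it says `B₊ˣ((f ⋆ Y) ⋆ Z) = B₊ˣ(f ⋆ (Y ⋆ Z))`: associativity for the forest of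
children, known by induction on trees. Right-sidedness holds because a nonzero `M(X¹; Y¹)`
contributes one letter and consumes at most one tree of `X`. -/

section SumSplits

variable {α β V W : Type*} [AddCommMonoid V] [AddCommMonoid W]

/-- The sum `∑_{l = p q} f(p, q)` over the factorizations of a word into a prefix and a suffix
(Sweedler notation for the deconcatenation of `l`). -/
def sumSplits (l : List α) (f : List α → List α → V) : V :=
  ∑ i ∈ Finset.range (l.length + 1), f (l.take i) (l.drop i)

theorem sumSplits_nil (f : List α → List α → V) : sumSplits [] f = f [] [] := by
  simp [sumSplits]

theorem sumSplits_cons (a : α) (l : List α) (f : List α → List α → V) :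
    sumSplits (a :: l) f = f [] (a :: l) + sumSplits l fun p q => f (a :: p) q := by
  rw [sumSplits, List.length_cons, Finset.sum_range_succ', add_comm]
  rfl

theorem sumSplits_congr {l : List α} {f g : List α → List α → V}
    (h : ∀ p q, p ++ q = l → f p q = g p q) : sumSplits l f = sumSplits l g :=
  Finset.sum_congr rfl fun i _ => h _ _ (List.take_append_drop i l)

theorem sumSplits_zero (l : List α) : sumSplits l (fun _ _ => (0 : V)) = 0 :=
  Finset.sum_const_zero

theorem sumSplits_add (l : List α) (f g : List α → List α → V) :
    sumSplits l (fun p q => f p q + g p q) = sumSplits l f + sumSplits l g :=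
  Finset.sum_add_distrib

theorem sumSplits_comm (l : List α) (m : List β) (f : List α → List α → List β → List β → V) :
    (sumSplits l fun p q => sumSplits m fun r s => f p q r s) =
      sumSplits m fun r s => sumSplits l fun p q => f p q r s :=
  Finset.sum_comm

theorem map_sumSplits {F : Type*} [FunLike F V W] [AddMonoidHomClass F V W] (φ : F) (l : List α)
    (f : List α → List α → V) : φ (sumSplits l f) = sumSplits l fun p q => φ (f p q) :=
  map_sum φ _ _

theorem sumSplits_mem {S : Type*} [SetLike S V] [AddSubmonoidClass S V] {N : S} {l : List α}
    {f : List α → List α → V} (h : ∀ p q, p ++ q = l → f p q ∈ N) : sumSplits l f ∈ N :=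
  sum_mem fun i _ => h _ _ (List.take_append_drop i l)

theorem sumSplits_coassoc (l : List α) (f : List α → List α → List α → V) :
    (sumSplits l fun p q => sumSplits q fun r s => f p r s) =
      sumSplits l fun p q => sumSplits p fun r s => f r s q := by
  induction l generalizing f with
  | nil => simp only [sumSplits_nil]
  | cons a l ih =>
    simp only [sumSplits_cons, sumSplits_nil, sumSplits_add, ih fun p => f (a :: p), add_assoc]

theorem sumSplits_coassoc₂ (l : List α) (m : List β)
    (f : List α → List β → List α → List β → List α → List β → V) :
    (sumSplits l fun p q => sumSplits m fun r s =>
        sumSplits q fun p' q' => sumSplits s fun r' s' => f p r p' r' q' s') =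
      sumSplits l fun p q => sumSplits m fun r s =>
        sumSplits p fun p' q' => sumSplits r fun r' s' => f p' r' q' s' q s := by
  calc
    _ = sumSplits l fun p q => sumSplits q fun p' q' =>
          sumSplits m fun r s => sumSplits s fun r' s' => f p r p' r' q' s' :=
      sumSplits_congr fun p q _ => sumSplits_comm m q fun r s p' q' =>
        sumSplits s fun r' s' => f p r p' r' q' s'
    _ = sumSplits l fun p q => sumSplits p fun p' q' =>
          sumSplits m fun r s => sumSplits s fun r' s' => f p' r q' r' q s' :=
      sumSplits_coassoc l fun p p' q' => sumSplits m fun r s =>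
        sumSplits s fun r' s' => f p r p' r' q' s'
    _ = sumSplits l fun p q => sumSplits p fun p' q' =>
          sumSplits m fun r s => sumSplits r fun r' s' => f p' r' q' s' q s :=
      sumSplits_congr fun p q _ => sumSplits_congr fun p' q' _ =>
        sumSplits_coassoc m fun r r' s' => f p' r q' r' q s'
    _ = _ :=
      sumSplits_congr fun p q _ => sumSplits_comm p m fun p' q' r s =>
        sumSplits r fun r' s' => f p' r' q' s' q s

theorem sumSplits_eq_left (l : List α) {f : List α → List α → V}
    (h : ∀ p q, p ≠ [] → f p q = 0) : sumSplits l f = f [] l := by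
  cases l with
  | nil => exact sumSplits_nil f
  | cons a l =>
    rw [sumSplits_cons, sumSplits_congr fun p q _ => h (a :: p) q (List.cons_ne_nil a p),
      sumSplits_zero, add_zero]

theorem sumSplits_eq_right (l : List α) {f : List α → List α → V}
    (h : ∀ p q, q ≠ [] → f p q = 0) : sumSplits l f = f l [] := by
  induction l generalizing f with
  | nil => exact sumSplits_nil f
  | cons a l ih => rw [sumSplits_cons, h _ _ (by simp), zero_add, ih fun p q => h (a :: p) q]

theorem sumSplits₂_eq_left (l : List α) (m : List β)
    {f : List α → List β → List α → List β → V}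
    (h : ∀ p r q s, ¬(p = [] ∧ r = []) → f p r q s = 0) :
    (sumSplits l fun p q => sumSplits m fun r s => f p r q s) = f [] [] l m := by
  rw [sumSplits_eq_left, sumSplits_eq_left]
  · exact fun r s hr => h _ _ _ _ fun h => hr h.2
  · exact fun p q hp => (sumSplits_congr fun r s _ => h _ _ _ _ fun h => hp h.1).trans
      (sumSplits_zero m)

theorem sumSplits₂_eq_right (l : List α) (m : List β)
    {f : List α → List β → List α → List β → V}
    (h : ∀ p r q s, ¬(q = [] ∧ s = []) → f p r q s = 0) :
    (sumSplits l fun p q => sumSplits m fun r s => f p r q s) = f l m [] [] := by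
  rw [sumSplits_eq_right, sumSplits_eq_right]
  · exact fun r s hs => h _ _ _ _ fun h => hs h.2
  · exact fun p q hq => (sumSplits_congr fun r s _ => h _ _ _ _ fun h => hq h.1).trans
      (sumSplits_zero m)

theorem sum_map_sumSplits {ι : Type*} (L : List ι) (l : List α) (f : ι → List α → List α → V) :
    (L.map fun i => sumSplits l (f i)).sum =
      sumSplits l fun p q => (L.map fun i => f i p q).sum := by
  induction L with
  | nil => exact (sumSplits_zero l).symm
  | cons i L ih => simp only [List.map_cons, List.sum_cons, ih, sumSplits_add]

theorem sum_map_splitsN_succ (k : ℕ) (l : List α) (g : List (List α) → V) :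
    ((splitsN (k + 1) l).map g).sum =
      sumSplits l fun p q => ((splitsN k q).map fun r => g (p :: r)).sum := by
  simp only [splitsN, splits, List.flatMap_def, List.map_flatten, List.sum_flatten, List.map_map,
    Function.comp_def]
  rfl

end SumSplits

section Words

variable {A α β V : Type*} [CommSemiring A] [AddCommMonoid V] [Module A V]

theorem sumSplits_linearMap_apply {W : Type*} [AddCommMonoid W] [Module A W] (l : List α)
    (f : List α → List α → V →ₗ[A] W) (v : V) :
    sumSplits l f v = sumSplits l fun p q => f p q v :=
  LinearMap.sum_apply _ _ _

theorem sumSplits_tmul {W : Type*} [AddCommMonoid W] [Module A W] (l : List α)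
    (f : List α → List α → V) (w : W) :
    sumSplits l f ⊗ₜ[A] w = sumSplits l fun p q => f p q ⊗ₜ[A] w :=
  TensorProduct.sum_tmul _ _ _

theorem tmul_sumSplits {W : Type*} [AddCommMonoid W] [Module A W] (v : V) (l : List α)
    (f : List α → List α → W) :
    v ⊗ₜ[A] sumSplits l f = sumSplits l fun p q => v ⊗ₜ[A] f p q :=
  TensorProduct.tmul_sum _ _ _

/-- The bilinear extension of a map defined on pairs of basis elements. -/
noncomputable def bilinearExt (f : α → β → V) : (α →₀ A) →ₗ[A] (β →₀ A) →ₗ[A] V :=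
  Finsupp.linearCombination A fun a => Finsupp.linearCombination A (f a)

@[simp]
theorem bilinearExt_single_single (f : α → β → V) (a : α) (b : β) :
    bilinearExt f (Finsupp.single a (1 : A)) (Finsupp.single b 1) = f a b := by
  simp [bilinearExt]

theorem bilinearExt_assoc {m : α → α → α →₀ A}
    (h : ∀ a b c, bilinearExt m (m a b) (Finsupp.single c 1) =
      bilinearExt m (Finsupp.single a 1) (m b c)) (u v w : α →₀ A) :
    bilinearExt m (bilinearExt m u v) w = bilinearExt m u (bilinearExt m v w) := by
  have key : (bilinearExt m).compr₂ (bilinearExt m) =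
      (LinearMap.llcomp A _ _ _ ∘ₗ bilinearExt m).compl₂ (bilinearExt m) := by
    ext a b c : 6
    simpa using h a b c
  exact LinearMap.congr_fun (LinearMap.congr_fun₂ key u v) w

/-- The bilinear map prepending a combination of letters to a combination of words. -/
noncomputable def consLin : (α →₀ A) →ₗ[A] (List α →₀ A) →ₗ[A] (List α →₀ A) :=
  bilinearExt fun a l => Finsupp.single (a :: l) 1

@[simp]
theorem consLin_single_single (a : α) (l : List α) :
    consLin (Finsupp.single a (1 : A)) (Finsupp.single l 1) = Finsupp.single (a :: l) 1 :=
  bilinearExt_single_single _ a l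

theorem consLin_apply (a : α →₀ A) (w : List α →₀ A) :
    consLin a w = a.sum fun t c => c • w.mapDomain (List.cons t) := by
  simp [consLin, bilinearExt, Finsupp.linearCombination_apply, Finsupp.sum, LinearMap.sum_apply,
    Finsupp.mapDomain]

theorem consLin_apply_nil (a : α →₀ A) (w : List α →₀ A) : consLin a w [] = 0 := by
  have key : (consLin (A := A) (α := α)).compr₂ (Finsupp.lapply []) = 0 := by
    ext a l
    simp
  exact LinearMap.congr_fun₂ key a w

/-- The deconcatenation coproduct, as a linear map over an arbitrary alphabet. -/
noncomputable def deconcLin : (List α →₀ A) →ₗ[A] (List α →₀ A) ⊗[A] (List α →₀ A) :=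
  Finsupp.linearCombination A fun l => sumSplits l fun p q =>
    Finsupp.single p (1 : A) ⊗ₜ[A] Finsupp.single q (1 : A)

theorem deconcLin_single (l : List α) :
    deconcLin (Finsupp.single l (1 : A)) = sumSplits l fun p q =>
      Finsupp.single p (1 : A) ⊗ₜ[A] Finsupp.single q (1 : A) := by
  simp [deconcLin]

theorem deconcLin_consLin (a : α →₀ A) (w : List α →₀ A) :
    deconcLin (consLin a w) = Finsupp.single [] 1 ⊗ₜ[A] consLin a w +
      (consLin a).rTensor _ (deconcLin w) := by
  have key : consLin.compr₂ deconcLin =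
      consLin.compr₂ (TensorProduct.mk A _ _ (Finsupp.single [] 1)) +
        ((LinearMap.rTensorHom (List α →₀ A)) ∘ₗ consLin (A := A) (α := α)).compl₂ deconcLin := by
    ext a l : 4
    simp [deconcLin_single, sumSplits_cons, map_sumSplits]
  exact LinearMap.congr_fun₂ key a w

variable (A α) in
/-- The span of the words of length at least `n`. -/
def longWords (n : ℕ) : Submodule A (List α →₀ A) :=
  Finsupp.supported A A {l | n ≤ l.length}

theorem longWords_anti {m n : ℕ} (h : m ≤ n) : longWords A α n ≤ longWords A α m :=
  Finsupp.supported_mono fun _ hl => h.trans hl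

theorem consLin_mem_longWords {n : ℕ} (a : α →₀ A) {w : List α →₀ A} (hw : w ∈ longWords A α n) :
    consLin a w ∈ longWords A α (n + 1) := by
  suffices longWords A α n ≤ (longWords A α (n + 1)).comap (consLin a) from this hw
  rw [longWords, Finsupp.supported_eq_span_single, Submodule.span_le]
  rintro _ ⟨l, hl : n ≤ l.length, rfl⟩
  rw [SetLike.mem_coe, Submodule.mem_comap, consLin_apply]
  refine Submodule.sum_mem _ fun t _ => Submodule.smul_mem _ _ ?_
  rw [Finsupp.mapDomain_single]
  exact Finsupp.single_mem_supported A 1 (Nat.succ_le_succ hl)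

end Words

section Recursion

variable (Mh : PTree R → Forest R → TreeMod K R)

theorem wordOf_cons (a : TreeMod K R) (r : List (TreeMod K R)) :
    wordOf (a :: r) = consLin a (wordOf r) :=
  (consLin_apply a (wordOf r)).symm

theorem MextF_eq_zero_of_one_lt_length {X : Forest R} (hX : 1 < X.length) (Y : Forest R) :
    MextF Mh X Y = 0 := by
  match X, hX with
  | _ :: _ :: _, _ => simp [MextF]

theorem MextF_singleton (t : PTree R) (Y : Forest R) : MextF Mh [t] Y = Mh t Y := by
  simp [MextF]

theorem MextF_nil_of_length_ne_one {Y : Forest R} (hY : Y.length ≠ 1) :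
    MextF Mh [] Y = 0 := by
  match Y, hY with
  | [], _ => simp [MextF]
  | _ :: _ :: _, _ => simp [MextF]

theorem length_add_length_pos_of_MextF_ne_zero {X Y : Forest R} (h : MextF Mh X Y ≠ 0) :
    0 < X.length + Y.length := by
  contrapose! h
  obtain ⟨hX, hY⟩ := Nat.add_eq_zero_iff.1 (Nat.le_zero.1 h)
  obtain rfl := List.length_eq_zero_iff.1 hX
  exact MextF_nil_of_length_ne_one Mh (by omega)

theorem map_MextF_congr {V W : Type*} [AddCommMonoid V] [Module K V] [AddCommMonoid W] [Module K W]
    (B : TreeMod K R →ₗ[K] V →ₗ[K] W) {p r : Forest R} {v w : V}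
    (h : 0 < p.length + r.length → v = w) : B (MextF Mh p r) v = B (MextF Mh p r) w := by
  by_cases hM : MextF Mh p r = 0
  · simp only [hM, map_zero, LinearMap.zero_apply]
  · rw [h (length_add_length_pos_of_MextF_ne_zero Mh hM)]

/-- The sum of the terms of the Loday–Ronco product with exactly `k` factors. -/
noncomputable def starPart (k : ℕ) (X Y : Forest R) : ForestMod K R :=
  ((splitsN k X).map fun Xs =>
    ((splitsN k Y).map fun Ys => wordOf (List.zipWith (MextF Mh) Xs Ys)).sum).sum

theorem starPart_zero (X Y : Forest R) :
    starPart Mh 0 X Y = if X = [] ∧ Y = [] then Finsupp.single [] 1 else 0 := by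
  cases X <;> cases Y <;> simp [starPart, splitsN, wordOf]

theorem starPart_succ (k : ℕ) (X Y : Forest R) :
    starPart Mh (k + 1) X Y = sumSplits X fun p q => sumSplits Y fun r s =>
      consLin (MextF Mh p r) (starPart Mh k q s) := by
  rw [starPart, sum_map_splitsN_succ]
  simp only [starPart, sum_map_splitsN_succ, sum_map_sumSplits, List.zipWith_cons_cons,
    wordOf_cons, map_list_sum, List.map_map, Function.comp_def]

theorem starPart_eq_zero {k : ℕ} {X Y : Forest R} (hk : X.length + Y.length < k) :
    starPart Mh k X Y = 0 := by
  induction k generalizing X Y with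
  | zero => exact absurd hk (Nat.not_lt_zero _)
  | succ k ih =>
    have term_zero (p q r s : Forest R) (hX : p ++ q = X) (hY : r ++ s = Y) :
        consLin (MextF Mh p r) (starPart Mh k q s) = 0 := by
      rw [map_MextF_congr Mh consLin (w := 0), map_zero]
      intro hpos
      subst hX hY
      simp only [List.length_append] at hk
      exact ih (by omega)
    rw [starPart_succ]
    exact (sumSplits_congr fun p q hX => (sumSplits_congr fun r s hY =>
      term_zero p q r s hX hY).trans (sumSplits_zero Y)).trans (sumSplits_zero X)

theorem starRHS_eq_sum_starPart {N : ℕ} {X Y : Forest R} (hN : X.length + Y.length ≤ N) :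
    starRHS Mh X Y = ∑ k ∈ Finset.range (N + 1), starPart Mh k X Y := by
  have factors_sum : ((List.range (X.length + Y.length)).flatMap fun k =>
      (splitsN (k + 1) X).flatMap fun Xs => (splitsN (k + 1) Y).map fun Ys =>
        wordOf (List.zipWith (MextF Mh) Xs Ys)).sum =
      ∑ k ∈ Finset.range (X.length + Y.length), starPart Mh (k + 1) X Y := by
    simp only [List.flatMap_def, List.sum_flatten, List.map_map, Function.comp_def]
    rfl
  have truncate : ∑ k ∈ Finset.range (X.length + Y.length + 1), starPart Mh k X Y =
      ∑ k ∈ Finset.range (N + 1), starPart Mh k X Y :=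
    Finset.sum_subset (Finset.range_subset_range.2 (by omega)) fun k _ hk =>
      starPart_eq_zero Mh (by simpa using hk)
  rw [← truncate, Finset.sum_range_succ', starPart_zero, ← factors_sum]
  cases X <;> cases Y <;> simp [starRHS]

theorem starRHS_rec (X Y : Forest R) :
    starRHS Mh X Y = (if X = [] ∧ Y = [] then Finsupp.single [] 1 else 0) +
      sumSplits X fun p q => sumSplits Y fun r s => consLin (MextF Mh p r) (starRHS Mh q s) := by
  have head_sum : ∑ k ∈ Finset.range (X.length + Y.length + 1), starPart Mh (k + 1) X Y =
      sumSplits X fun p q => sumSplits Y fun r s =>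
        ∑ k ∈ Finset.range (X.length + Y.length + 1),
          consLin (MextF Mh p r) (starPart Mh k q s) := by
    simp only [starPart_succ, sumSplits]
    rw [Finset.sum_comm]
    exact Finset.sum_congr rfl fun i _ => Finset.sum_comm
  rw [starRHS_eq_sum_starPart Mh (Nat.le_succ _), Finset.sum_range_succ', starPart_zero, add_comm,
    head_sum]
  refine congrArg _ (sumSplits_congr fun p q hX => sumSplits_congr fun r s hY => ?_)
  subst hX hY
  rw [starRHS_eq_sum_starPart Mh (N := (p ++ q).length + (r ++ s).length), map_sum]
  simp only [List.length_append]
  omega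

theorem starRHS_nil_left (Y : Forest R) : starRHS Mh [] Y = Finsupp.single Y 1 := by
  induction Y with
  | nil => simp [starRHS]
  | cons y Y ih =>
    rw [starRHS_rec, sumSplits_nil, sumSplits_cons, sumSplits_eq_left, ih]
    · simp [MextF]
    · intro r s hr
      rw [MextF_nil_of_length_ne_one Mh (by simpa using hr), map_zero, LinearMap.zero_apply]

theorem starRHS_nil_right {X : Forest R} (hX : ∀ t ∈ X, Mh t [] = Finsupp.single t 1) :
    starRHS Mh X [] = Finsupp.single X 1 := by
  induction X with
  | nil => exact starRHS_nil_left Mh []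
  | cons x X ih =>
    rw [starRHS_rec]
    simp only [sumSplits_nil]
    rw [sumSplits_cons, sumSplits_eq_left, ih fun t ht => hX t (List.mem_cons_of_mem x ht)]
    · simp [MextF, hX x List.mem_cons_self]
    · intro p q hp
      rw [MextF_eq_zero_of_one_lt_length Mh (by simpa [List.length_pos_iff] using hp), map_zero,
        LinearMap.zero_apply]

theorem starRHS_mem_longWords (X Y : Forest R) :
    starRHS Mh X Y ∈ longWords K (PTree R) X.length := by
  induction hn : X.length + Y.length using Nat.strong_induction_on generalizing X Y with
  | _ n ih =>
    subst hn
    rw [starRHS_rec]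
    refine add_mem ?_ (sumSplits_mem fun p q hX => sumSplits_mem fun r s hY => ?_)
    · split_ifs with h
      · exact Finsupp.single_mem_supported K 1 (by simp [h])
      · exact zero_mem _
    · by_cases hM : MextF Mh p r = 0
      · simp only [hM, map_zero, LinearMap.zero_apply, zero_mem]
      · have hp : p.length ≤ 1 :=
          not_lt.1 fun hp => hM (MextF_eq_zero_of_one_lt_length Mh hp r)
        have hpr := length_add_length_pos_of_MextF_ne_zero Mh hM
        subst hX hY
        simp only [List.length_append] at ih ⊢
        exact longWords_anti (by omega) (consLin_mem_longWords _ (ih _ (by omega) q s rfl))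

theorem starRHS_apply_nil (X Y : Forest R) :
    starRHS Mh X Y [] = if X = [] ∧ Y = [] then 1 else 0 := by
  have recursion := congrArg (Finsupp.lapply (R := K) []) (starRHS_rec Mh X Y)
  simp only [map_add, map_sumSplits, Finsupp.lapply_apply, consLin_apply_nil, sumSplits_zero,
    add_zero] at recursion
  rw [recursion]
  split_ifs <;> simp

/-- Such a `φ` kills the words of length at least two, so only the product with one factor is
seen. -/
theorem map_starRHS_of_map_consLin {V : Type*} [AddCommMonoid V] [Module K V]
    {φ : ForestMod K R →ₗ[K] V} {ψ : TreeMod K R →ₗ[K] V}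
    (h : ∀ a w, φ (consLin a w) = w [] • ψ a) (X Y : Forest R) :
    φ (starRHS Mh X Y) =
      (if X = [] ∧ Y = [] then φ (Finsupp.single [] 1) else 0) + ψ (MextF Mh X Y) := by
  rw [starRHS_rec]
  simp only [map_add, map_sumSplits, h, starRHS_apply_nil, apply_ite φ, map_zero]
  rw [sumSplits₂_eq_right]
  · simp
  · intro p r q s hqs
    rw [if_neg hqs, zero_smul]

end Recursion

section Comultiplicativity

variable (Mh : PTree R → Forest R → TreeMod K R)

theorem deconcLin_starRHS_eq_add (X Y : Forest R) :
    deconcLin (starRHS Mh X Y) = Finsupp.single [] 1 ⊗ₜ[K] starRHS Mh X Y +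
      sumSplits X fun p q => sumSplits Y fun r s =>
        (consLin (MextF Mh p r)).rTensor _ (deconcLin (starRHS Mh q s)) := by
  have unit_part :
      deconcLin (if X = [] ∧ Y = [] then Finsupp.single ([] : Forest R) (1 : K) else 0) =
        Finsupp.single [] 1 ⊗ₜ[K] if X = [] ∧ Y = [] then Finsupp.single [] 1 else 0 := by
    split_ifs <;> simp [deconcLin_single, sumSplits_nil]
  rw [starRHS_rec]
  simp only [map_add, map_sumSplits, unit_part, deconcLin_consLin, TensorProduct.tmul_add,
    tmul_sumSplits, sumSplits_add, add_assoc]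

theorem deconcLin_starRHS (X Y : Forest R) :
    deconcLin (starRHS Mh X Y) = sumSplits X fun p q => sumSplits Y fun r s =>
      starRHS Mh p r ⊗ₜ[K] starRHS Mh q s := by
  induction hn : X.length + Y.length using Nat.strong_induction_on generalizing X Y with
  | _ n ih =>
    subst hn
    have unit_part : Finsupp.single ([] : Forest R) (1 : K) ⊗ₜ[K] starRHS Mh X Y =
        sumSplits X fun p q => sumSplits Y fun r s =>
          (if p = [] ∧ r = [] then Finsupp.single [] 1 else 0) ⊗ₜ[K] starRHS Mh q s := by
      rw [sumSplits₂_eq_left]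
      · simp
      · intro p r q s hpr
        rw [if_neg hpr, TensorProduct.zero_tmul]
    have tail (p q r s : Forest R) (hX : p ++ q = X) (hY : r ++ s = Y) :
        (consLin (MextF Mh p r)).rTensor _ (deconcLin (starRHS Mh q s)) =
          sumSplits q fun p' q' => sumSplits s fun r' s' =>
            consLin (MextF Mh p r) (starRHS Mh p' r') ⊗ₜ[K] starRHS Mh q' s' := by
      have induction_step := map_MextF_congr Mh
        (LinearMap.rTensorHom (ForestMod K R) ∘ₗ consLin) (p := p) (r := r) fun hpr =>
          ih (q.length + s.length) (by subst hX hY; simp only [List.length_append]; omega) q s rfl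
      simpa only [LinearMap.comp_apply, LinearMap.coe_rTensorHom, map_sumSplits,
        LinearMap.rTensor_tmul] using induction_step
    rw [deconcLin_starRHS_eq_add, sumSplits_congr fun p q hX => sumSplits_congr fun r s hY =>
      tail p q r s hX hY, sumSplits_coassoc₂ X Y fun p r p' r' q' s' =>
        consLin (MextF Mh p r) (starRHS Mh p' r') ⊗ₜ[K] starRHS Mh q' s', unit_part]
    simp only [← sumSplits_add, ← sumSplits_tmul, ← TensorProduct.add_tmul, ← starRHS_rec]

theorem deconc_eq_deconcLin (a : ForestMod K R) : deconc a = deconcLin a := by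
  simp only [deconc, deconcLin, Finsupp.linearCombination_apply, sumSplits]

end Comultiplicativity

section Associativity

variable (Mh : PTree R → Forest R → TreeMod K R)

/-- The Loday–Ronco product as a bilinear map on `T(R^𝒯)`. -/
noncomputable def lodayRonco : ForestMod K R →ₗ[K] ForestMod K R →ₗ[K] ForestMod K R :=
  bilinearExt (starRHS Mh)

/-- The extension of the brace operation to pairs of forests, as a bilinear map on `T(R^𝒯)`. -/
noncomputable def multibrace : ForestMod K R →ₗ[K] ForestMod K R →ₗ[K] TreeMod K R :=
  bilinearExt (MextF Mh)

theorem lodayRonco_single_single (X Y : Forest R) :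
    lodayRonco Mh (Finsupp.single X 1) (Finsupp.single Y 1) = starRHS Mh X Y :=
  bilinearExt_single_single _ X Y

theorem multibrace_single_single (X Y : Forest R) :
    multibrace Mh (Finsupp.single X 1) (Finsupp.single Y 1) = MextF Mh X Y :=
  bilinearExt_single_single _ X Y

theorem multibrace_single_singleton (t : PTree R) (a : ForestMod K R) :
    multibrace Mh (Finsupp.single [t] 1) a = bilinearExt Mh (Finsupp.single t 1) a := by
  have key : multibrace Mh (Finsupp.single [t] 1) = bilinearExt Mh (Finsupp.single t 1) := by
    ext X : 2
    simp [multibrace_single_single, MextF_singleton]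
  exact LinearMap.congr_fun key a

theorem starLin_starRHS (a b : ForestMod K R) : starLin (starRHS Mh) a b = lodayRonco Mh a b := by
  simp [starLin, lodayRonco, bilinearExt, Finsupp.linearCombination_apply, Finsupp.sum,
    LinearMap.sum_apply, Finset.smul_sum, mul_smul]

theorem lodayRonco_rec (a b : ForestMod K R) :
    lodayRonco Mh a b = (a [] * b []) • Finsupp.single [] 1 +
      TensorProduct.lift consLin (TensorProduct.map₂ (multibrace Mh) (lodayRonco Mh)
        (deconcLin a) (deconcLin b)) := by
  have key : lodayRonco Mh =
      ((LinearMap.mul K K).compl₁₂ (Finsupp.lapply []) (Finsupp.lapply [])).compr₂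
          (LinearMap.toSpanSingleton K _ (Finsupp.single [] 1)) +
        ((TensorProduct.map₂ (multibrace Mh) (lodayRonco Mh)).compl₁₂ deconcLin deconcLin).compr₂
          (TensorProduct.lift consLin) := by
    ext X Y : 4
    have basis_case : starRHS Mh X Y =
        ((Finsupp.single X (1 : K) []) * (Finsupp.single Y (1 : K) [])) • Finsupp.single [] 1 +
          sumSplits Y fun r s => sumSplits X fun p q =>
            consLin (MextF Mh p r) (starRHS Mh q s) := by
      rw [starRHS_rec, sumSplits_comm]
      congr 1
      cases X <;> cases Y <;> simp
    simpa [lodayRonco_single_single, multibrace_single_single, deconcLin_single, map_sumSplits,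
      sumSplits_linearMap_apply] using basis_case
  exact LinearMap.congr_fun₂ key a b

theorem lodayRonco_nil_left (a : ForestMod K R) :
    lodayRonco Mh (Finsupp.single [] 1) a = a := by
  have key : lodayRonco Mh (Finsupp.single [] 1) = LinearMap.id := by
    ext X : 2
    simp [lodayRonco_single_single, starRHS_nil_left]
  exact LinearMap.congr_fun key a

theorem multibrace_nil_starRHS (X Y : Forest R) :
    multibrace Mh (Finsupp.single [] 1) (starRHS Mh X Y) = MextF Mh X Y := by
  have on_cons (a : TreeMod K R) (w : ForestMod K R) :
      multibrace Mh (Finsupp.single [] 1) (consLin a w) = w [] • a := by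
    have key : consLin.compr₂ (multibrace Mh (Finsupp.single [] 1)) =
        (LinearMap.lsmul K (TreeMod K R) ∘ₗ Finsupp.lapply []).flip := by
      ext t X : 4
      cases X <;> simp [multibrace_single_single, MextF]
    exact LinearMap.congr_fun₂ key a w
  rw [map_starRHS_of_map_consLin Mh (ψ := LinearMap.id) on_cons]
  simp [multibrace, MextF]

theorem multibrace_starRHS (X Y Z : Forest R) :
    multibrace Mh (starRHS Mh X Y) (Finsupp.single Z 1) =
      (if X = [] ∧ Y = [] then MextF Mh [] Z else 0) +
        bilinearExt Mh (MextF Mh X Y) (Finsupp.single Z 1) := by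
  have on_cons (a : TreeMod K R) (w : ForestMod K R) :
      (multibrace Mh).flip (Finsupp.single Z 1) (consLin a w) =
        w [] • (bilinearExt Mh).flip (Finsupp.single Z 1) a := by
    have key : consLin.compr₂ ((multibrace Mh).flip (Finsupp.single Z 1)) =
        (LinearMap.lsmul K (TreeMod K R) ∘ₗ Finsupp.lapply []).flip ∘ₗ
          (bilinearExt Mh).flip (Finsupp.single Z 1) := by
      ext t X : 4
      cases X <;> simp [multibrace_single_single, MextF]
    exact LinearMap.congr_fun₂ key a w
  simpa [multibrace_single_single] using map_starRHS_of_map_consLin Mh on_cons X Y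

/-- The multibrace (`B_∞`) relation `M(X ⋆ Y; Z) = M(X; Y ⋆ Z)` for a fixed forest `X` and all
forests `Y`, `Z`. -/
def MultibraceRelation (X : Forest R) : Prop :=
  ∀ Y Z : Forest R, multibrace Mh (starRHS Mh X Y) (Finsupp.single Z 1) =
    multibrace Mh (Finsupp.single X 1) (starRHS Mh Y Z)

theorem MultibraceRelation.of_forall_mem {X : Forest R}
    (hX : ∀ t ∈ X, MultibraceRelation Mh [t]) : MultibraceRelation Mh X := by
  intro Y Z
  match X, hX with
  | [], _ => rw [starRHS_nil_left, multibrace_single_single, multibrace_nil_starRHS]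
  | [t], hX => exact hX t List.mem_cons_self Y Z
  | t :: t' :: X, _ =>
    have vanish : multibrace Mh (Finsupp.single (t :: t' :: X) 1) = 0 := by
      ext Y : 2
      simp [multibrace_single_single, MextF]
    simp [multibrace_starRHS, vanish, MextF]

theorem starRHS_assoc {X : Forest R}
    (hX : ∀ t ∈ X, MultibraceRelation Mh [t]) (Y Z : Forest R) :
    lodayRonco Mh (starRHS Mh X Y) (Finsupp.single Z 1) =
      lodayRonco Mh (Finsupp.single X 1) (starRHS Mh Y Z) := by
  induction hn : X.length + Y.length + Z.length using Nat.strong_induction_on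
    generalizing X Y Z with
  | _ n ih =>
    subst hn
    have term_assoc (p q r s t u : Forest R) (hpq : p ++ q = X) (hrs : r ++ s = Y)
        (htu : t ++ u = Z) :
        consLin (multibrace Mh (starRHS Mh p r) (Finsupp.single t 1))
            (lodayRonco Mh (starRHS Mh q s) (Finsupp.single u 1)) =
          consLin (multibrace Mh (Finsupp.single p 1) (starRHS Mh r t))
            (lodayRonco Mh (Finsupp.single q 1) (starRHS Mh s u)) := by
      subst hpq hrs htu
      have tail_assoc (hpos : 0 < p.length + r.length + t.length) :=
        ih (q.length + s.length + u.length) (by simp only [List.length_append]; omega)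
          (fun x hx => hX x (List.mem_append_right p hx)) s u rfl
      rw [MultibraceRelation.of_forall_mem Mh fun x hx => hX x (List.mem_append_left q hx)]
      cases p with
      | nil =>
        rw [multibrace_nil_starRHS]
        exact map_MextF_congr Mh consLin fun hpos => tail_assoc (by simpa using hpos)
      | cons x p => rw [tail_assoc (by simp)]
    have unit_part : starRHS Mh X Y [] * Finsupp.single Z 1 [] =
        Finsupp.single X 1 [] * starRHS Mh Y Z [] := by
      cases X <;> cases Y <;> cases Z <;> simp [starRHS_apply_nil]
    rw [lodayRonco_rec, lodayRonco_rec, unit_part]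
    simp only [deconcLin_starRHS, deconcLin_single, map_sumSplits, sumSplits_linearMap_apply,
      TensorProduct.map₂_apply_tmul, TensorProduct.map_tmul, TensorProduct.lift.tmul]
    rw [sumSplits_comm Y Z]
    refine congrArg _ (sumSplits_congr fun t u htu => ?_)
    rw [sumSplits_comm Y X]
    exact sumSplits_congr fun p q hpq => sumSplits_congr fun r s hrs =>
      term_assoc p q r s t u hpq hrs htu

end Associativity

section TreeBrace

@[elab_as_elim]
theorem PTree.induction {P : PTree R → Prop}
    (node : ∀ x f, (∀ t ∈ f, P t) → P (.node x f)) : ∀ t, P t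
  | .node x f => node x f fun t _ => PTree.induction node t

variable {Mh : PTree R → Forest R → TreeMod K R}

theorem IsTreeBrace.apply_nil (h : IsTreeBrace Mh (starRHS Mh)) (t : PTree R) :
    Mh t [] = Finsupp.single t 1 := by
  induction t using PTree.induction with
  | node x f ih => rw [← Bplus, h.1, starRHS_nil_right Mh ih, Finsupp.mapDomain_single]

theorem IsTreeBrace.bilinearExt_mapDomain_Bplus (h : IsTreeBrace Mh (starRHS Mh)) (x : R)
    (u v : ForestMod K R) :
    bilinearExt Mh (u.mapDomain (Bplus x)) v = (lodayRonco Mh u v).mapDomain (Bplus x) := by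
  have key : bilinearExt Mh ∘ₗ Finsupp.lmapDomain K K (Bplus x) =
      (lodayRonco Mh).compr₂ (Finsupp.lmapDomain K K (Bplus x)) := by
    ext X Y : 4
    simp [lodayRonco_single_single, h.1]
  exact LinearMap.congr_fun₂ key u v

theorem IsTreeBrace.multibraceRelation_singleton (h : IsTreeBrace Mh (starRHS Mh)) (t : PTree R) :
    MultibraceRelation Mh [t] := by
  induction t using PTree.induction with
  | node x f ih =>
    intro Y Z
    calc
      multibrace Mh (starRHS Mh [.node x f] Y) (Finsupp.single Z 1)
      _ = bilinearExt Mh (MextF Mh [Bplus x f] Y) (Finsupp.single Z 1) := by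
        simp [multibrace_starRHS, Bplus]
      _ = (lodayRonco Mh (starRHS Mh f Y) (Finsupp.single Z 1)).mapDomain (Bplus x) := by
        rw [MextF_singleton, h.1, h.bilinearExt_mapDomain_Bplus]
      _ = (lodayRonco Mh (Finsupp.single f 1) (starRHS Mh Y Z)).mapDomain (Bplus x) := by
        rw [starRHS_assoc Mh ih]
      _ = multibrace Mh (Finsupp.single [.node x f] 1) (starRHS Mh Y Z) := by
        rw [multibrace_single_singleton, ← h.bilinearExt_mapDomain_Bplus,
          Finsupp.mapDomain_single, Bplus]

theorem IsTreeBrace.lodayRonco_nil_right (h : IsTreeBrace Mh (starRHS Mh)) (a : ForestMod K R) :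
    lodayRonco Mh a (Finsupp.single [] 1) = a := by
  have key : (lodayRonco Mh).flip (Finsupp.single [] 1) = LinearMap.id := by
    ext X : 2
    simp [lodayRonco_single_single, starRHS_nil_right Mh fun t _ => h.apply_nil t]
  exact LinearMap.congr_fun key a

end TreeBrace

/-- Let `R` be a `K`-vector space, `M` the recursive brace
operation on decorated trees, and `⋆` the induced Loday–Ronco product on decorated
forests.  Then `⋆` is associative with unit the empty forest `1`, the
deconcatenation coproduct `Δ` is multiplicative for `⋆` (so `(T(R^𝒯), ⋆, Δ)` is a
bialgebra), and `⋆` is right-sided: for every `p ≥ 0`,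
`(⊕_{n≥p} (R^𝒯)^{⊗n}) ⋆ T(R^𝒯) ⊆ ⊕_{n≥p} (R^𝒯)^{⊗n}`. -/
theorem tree_star_bialgebra_and_right_sided
    (Mh : PTree R → Forest R → TreeMod K R)
    (star : Forest R → Forest R → ForestMod K R)
    (h : IsTreeBrace Mh star) :
    -- associativity
    (∀ a b c : ForestMod K R, starLin star (starLin star a b) c = starLin star a (starLin star b c)) ∧
    -- the empty forest is the unit
    (∀ a : ForestMod K R,
        starLin star (Finsupp.single ([] : Forest R) 1) a = a ∧
        starLin star a (Finsupp.single ([] : Forest R) 1) = a) ∧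
    -- multiplicativity of the deconcatenation coproduct for `⋆`
    (∀ X Y : Forest R,
        deconc (star X Y) =
          ∑ i ∈ Finset.range (X.length + 1), ∑ j ∈ Finset.range (Y.length + 1),
            star (X.take i) (Y.take j) ⊗ₜ[K] star (X.drop i) (Y.drop j)) ∧
    -- the right-sided condition
    (∀ (p : ℕ) (X Y : Forest R), p ≤ X.length →
        ∀ g ∈ (star X Y).support, p ≤ g.length) := by
  obtain rfl : star = starRHS Mh := funext₂ h.2
  have assoc := bilinearExt_assoc fun X Y Z =>
    starRHS_assoc Mh (X := X) (fun t _ => h.multibraceRelation_singleton t) Y Z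
  refine ⟨fun a b c => ?_, fun a => ⟨?_, ?_⟩, fun X Y => ?_, fun p X Y hp g hg => ?_⟩
  · simp only [starLin_starRHS]
    exact assoc a b c
  · rw [starLin_starRHS, lodayRonco_nil_left]
  · rw [starLin_starRHS, h.lodayRonco_nil_right]
  · rw [deconc_eq_deconcLin]
    exact deconcLin_starRHS Mh X Y
  · exact hp.trans (starRHS_mem_longWords Mh X Y hg)

end
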